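/- For every x ∈ {1,…,m} and every n ≥ 0, the degree-n cohomology of the restricted complex (C^•_x, D_x) has dimension dim_ℂ H^n_x = (r+s−1)^n (here D_x means D_{e_1} when x = 1); indeed the inclusion of Ĉ^n_x into the cocycles induces an isomorphism Ĉ^n_x ≅ H^n_x. -/

import Mathlib

open Finsupp Submodule LinearMap

set_option maxSynthPendingDepth 2

namespace NilpotentCohomology

/-- The big space of cochains of all degrees: formal ℂ-linear combinations of
basis symbols `φ^I_x` indexed by a multi-index `I : List (Fin m)` and an output
index `x : Fin m`. -/
abbrev Cochain (m : ℕ) : Type := (List (Fin m) × Fin m) →₀ ℂ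

/-- Parity of an index: `0` if the index is among the first `r` (even) ones, `1` otherwise. -/
def par (r : ℕ) {m : ℕ} (i : Fin m) : ℕ := if (i : ℕ) < r then 0 else 1

/-- Parity of a multi-index: the sum of the parities of its entries. -/
def lpar (r : ℕ) {m : ℕ} (I : List (Fin m)) : ℕ := (I.map (par r)).sum

/-- Parity of a basis cochain `φ^I_x`: `|I| + |x|`. -/
def ppar (r : ℕ) {m : ℕ} (p : List (Fin m) × Fin m) : ℕ := lpar r p.1 + par r p.2

/-- `(I, J, k)`: the multi-index `I` with its `k`-th entry (0-indexed) replaced by the string `J`. -/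
def insertAt {m : ℕ} (I J : List (Fin m)) (k : ℕ) : List (Fin m) :=
  I.take k ++ J ++ I.drop (k + 1)

/-- The insertion product of two basis cochains `φ^I_x ∘ φ^J_y`. -/
noncomputable def basisComp (r : ℕ) {m : ℕ} (p q : List (Fin m) × Fin m) : Cochain m :=
  ∑ k : Fin p.1.length,
    if p.1.get k = q.2 then
      ((-1 : ℂ) ^ (lpar r (p.1.take ((k : ℕ) + 1)) * ppar r q)) •
        Finsupp.single (insertAt p.1 q.1 (k : ℕ), p.2) (1 : ℂ)
    else 0

/-- The insertion product, extended bilinearly. -/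
noncomputable def comp (r : ℕ) {m : ℕ} :
    Cochain m →ₗ[ℂ] Cochain m →ₗ[ℂ] Cochain m :=
  Finsupp.lsum ℂ fun p => LinearMap.toSpanSingleton ℂ _
    (Finsupp.lsum ℂ fun q => LinearMap.toSpanSingleton ℂ (Cochain m) (basisComp r p q))

/-- The bracket `[φ, ψ] = φ∘ψ − (−1)^{|φ||ψ|} ψ∘φ` of two parity-homogeneous cochains
of parities `pf` and `pg`. -/
noncomputable def bracket (r : ℕ) {m : ℕ} (pf pg : ℕ) (f g : Cochain m) : Cochain m :=
  comp r f g - ((-1 : ℂ) ^ (pf * pg)) • comp r g f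

/-- The quadratic cochain `φ^{(a,a)}_b`. -/
noncomputable def dd {m : ℕ} (a b : Fin m) : Cochain m :=
  Finsupp.single ([a, a], b) (1 : ℂ)

/-- The linear map multiplying each basis cochain by `(−1)^{its parity}`. -/
noncomputable def twist (r : ℕ) {m : ℕ} : Cochain m →ₗ[ℂ] Cochain m :=
  Finsupp.lsum ℂ fun p => LinearMap.toSpanSingleton ℂ (Cochain m)
    (((-1 : ℂ) ^ (ppar r p)) • Finsupp.single p (1 : ℂ))

/-- The coboundary operator `D(φ) = [d, φ] = d∘φ − (−1)^{|d||φ|} φ∘d` for the odd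
codifferential `d = φ^{(a,a)}_b`, extended linearly from parity-homogeneous `φ`. -/
noncomputable def Dop (r : ℕ) {m : ℕ} (a b : Fin m) : Cochain m →ₗ[ℂ] Cochain m :=
  comp r (dd a b) - ((comp r).flip (dd a b)) ∘ₗ twist r

/-- `C^n`: the span of the basis cochains `φ^I_x` with `I` of length `n`. -/
noncomputable def Cn (m n : ℕ) : Submodule ℂ (Cochain m) :=
  Submodule.span ℂ
    {f | ∃ I : List (Fin m), I.length = n ∧ ∃ x : Fin m, f = Finsupp.single (I, x) 1}

/-- `C^n_x`: the span of the basis cochains `φ^I_x` with `I` of length `n` and output `x`. -/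
noncomputable def Cnx (m : ℕ) (n : ℕ) (x : Fin m) : Submodule ℂ (Cochain m) :=
  Submodule.span ℂ
    {f | ∃ I : List (Fin m), I.length = n ∧ f = Finsupp.single (I, x) 1}

/-- The projection onto the cochains with output index `x`. -/
noncomputable def projOut {m : ℕ} (x : Fin m) : Cochain m →ₗ[ℂ] Cochain m :=
  Finsupp.lsum ℂ fun p => LinearMap.toSpanSingleton ℂ (Cochain m)
    (if p.2 = x then Finsupp.single p (1 : ℂ) else 0)

/-- `λ^J (φ^I_x) = φ^{JI}_x`, extended linearly. -/
noncomputable def lam {m : ℕ} (J : List (Fin m)) : Cochain m →ₗ[ℂ] Cochain m :=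
  Finsupp.lsum ℂ fun p => LinearMap.toSpanSingleton ℂ (Cochain m)
    (Finsupp.single (J ++ p.1, p.2) (1 : ℂ))

/-- `ρ^J (φ^I_x) = (−1)^{|I||J|} φ^{IJ}_x`, extended linearly. -/
noncomputable def rho (r : ℕ) {m : ℕ} (J : List (Fin m)) : Cochain m →ₗ[ℂ] Cochain m :=
  Finsupp.lsum ℂ fun p => LinearMap.toSpanSingleton ℂ (Cochain m)
    (((-1 : ℂ) ^ (lpar r p.1 * lpar r J)) • Finsupp.single (p.1 ++ J, p.2) (1 : ℂ))

/-- `θ = λ^{(a,b)} − λ^{(b,a)}`. -/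
noncomputable def theta {m : ℕ} (a b : Fin m) : Cochain m →ₗ[ℂ] Cochain m :=
  lam [a, b] - lam [b, a]

/-- `τ`: swaps the outputs `a` and `b` of basis cochains (identity on other outputs). -/
noncomputable def tau {m : ℕ} (a b : Fin m) : Cochain m →ₗ[ℂ] Cochain m :=
  Finsupp.lsum ℂ fun p => LinearMap.toSpanSingleton ℂ (Cochain m)
    (Finsupp.single (p.1, if p.2 = a then b else if p.2 = b then a else p.2) (1 : ℂ))

/-! ### Full cohomology -/

/-- Cocycles of degree `n` of the full complex. -/
noncomputable def Zfull (r : ℕ) {m : ℕ} (a b : Fin m) (n : ℕ) : Submodule ℂ (Cochain m) :=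
  Cn m n ⊓ LinearMap.ker (Dop r a b)

/-- Coboundaries of degree `n` of the full complex (`C^{-1} = 0`). -/
noncomputable def Bfull (r : ℕ) {m : ℕ} (a b : Fin m) : ℕ → Submodule ℂ (Cochain m)
  | 0 => ⊥
  | n + 1 => Submodule.map (Dop r a b) (Cn m n)

/-- The full cohomology `H^n = Z^n / B^n`. -/
noncomputable abbrev Hfull (r : ℕ) {m : ℕ} (a b : Fin m) (n : ℕ) : Type :=
  Zfull r a b n ⧸ (Bfull r a b n).comap (Zfull r a b n).subtype

/-! ### The restricted complexes -/

/-- The restricted differential `D_x`: the `e₁`-output component of `D` when `x = a`,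
and `D` itself (which preserves output `x`) otherwise. -/
noncomputable def Dx (r : ℕ) {m : ℕ} (a b x : Fin m) : Cochain m →ₗ[ℂ] Cochain m :=
  if x = a then projOut a ∘ₗ Dop r a b else Dop r a b

/-- Cocycles of the restricted complex `(C^•_x, D_x)`. -/
noncomputable def Zx (r : ℕ) {m : ℕ} (a b x : Fin m) (n : ℕ) : Submodule ℂ (Cochain m) :=
  Cnx m n x ⊓ LinearMap.ker (Dx r a b x)

/-- Coboundaries of the restricted complex `(C^•_x, D_x)` (`C^{-1}_x = 0`). -/
noncomputable def Bx (r : ℕ) {m : ℕ} (a b x : Fin m) : ℕ → Submodule ℂ (Cochain m)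
  | 0 => ⊥
  | n + 1 => Submodule.map (Dx r a b x) (Cnx m n x)

/-- Cohomology `H^n_x` of the restricted complex `(C^•_x, D_x)`. -/
noncomputable abbrev Hx (r : ℕ) {m : ℕ} (a b x : Fin m) (n : ℕ) : Type :=
  Zx r a b x n ⧸ (Bx r a b x n).comap (Zx r a b x n).subtype

/-! ### The subcomplex `C^•_a ⊕ C^•_b` and the `b`-output complex -/

/-- `C^n_a ⊕ C^n_b` (internal direct sum). -/
noncomputable def Cpair (m : ℕ) (a b : Fin m) (n : ℕ) : Submodule ℂ (Cochain m) :=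
  Cnx m n a ⊔ Cnx m n b

noncomputable def Zpair (r : ℕ) {m : ℕ} (a b : Fin m) (n : ℕ) : Submodule ℂ (Cochain m) :=
  Cpair m a b n ⊓ LinearMap.ker (Dop r a b)

noncomputable def Bpair (r : ℕ) {m : ℕ} (a b : Fin m) : ℕ → Submodule ℂ (Cochain m)
  | 0 => ⊥
  | n + 1 => Submodule.map (Dop r a b) (Cpair m a b n)

/-- `H^n`: the cohomology of the subcomplex `(C^•_a ⊕ C^•_b, D)`. -/
noncomputable abbrev Hpair (r : ℕ) {m : ℕ} (a b : Fin m) (n : ℕ) : Type :=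
  Zpair r a b n ⧸ (Bpair r a b n).comap (Zpair r a b n).subtype

/-- Cocycles of `(C^•_b, D_b)`, where `D_b` is the restriction of `D`. -/
noncomputable def Zm (r : ℕ) {m : ℕ} (a b : Fin m) (n : ℕ) : Submodule ℂ (Cochain m) :=
  Cnx m n b ⊓ LinearMap.ker (Dop r a b)

noncomputable def Bm (r : ℕ) {m : ℕ} (a b : Fin m) : ℕ → Submodule ℂ (Cochain m)
  | 0 => ⊥
  | n + 1 => Submodule.map (Dop r a b) (Cnx m n b)

/-- `H^n_b`: the cohomology of `(C^•_b, D_b)`. -/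
noncomputable abbrev Hm (r : ℕ) {m : ℕ} (a b : Fin m) (n : ℕ) : Type :=
  Zm r a b n ⧸ (Bm r a b n).comap (Zm r a b n).subtype

lemma Zm_le_Zpair (r : ℕ) {m : ℕ} (a b : Fin m) (n : ℕ) :
    Zm r a b n ≤ Zpair r a b n :=
  inf_le_inf le_sup_right le_rfl

lemma Bm_le_Bpair (r : ℕ) {m : ℕ} (a b : Fin m) : ∀ n : ℕ, Bm r a b n ≤ Bpair r a b n
  | 0 => bot_le
  | _ + 1 => Submodule.map_mono le_sup_right

/-- The natural map `H^n_b → H^n` induced by the inclusion of cocycles. -/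
noncomputable def iotaHm (r : ℕ) {m : ℕ} (a b : Fin m) (n : ℕ) :
    Hm r a b n →ₗ[ℂ] Hpair r a b n :=
  Submodule.mapQ _ _ (Submodule.inclusion (Zm_le_Zpair r a b n))
    (fun z hz => Bm_le_Bpair r a b n hz)

/-- `Ĥ^n_f`: the image of `H^n_b` in `H^n`. -/
noncomputable def Hfhat (r : ℕ) {m : ℕ} (a b : Fin m) (n : ℕ) : Submodule ℂ (Hpair r a b n) :=
  LinearMap.range (iotaHm r a b n)

/-- `Ĥ^n_e = H^n / Ĥ^n_f`. -/
noncomputable abbrev Hehat (r : ℕ) {m : ℕ} (a b : Fin m) (n : ℕ) : Type :=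
  Hpair r a b n ⧸ Hfhat r a b n

/-! ### The spaces `Ĉ^n_x` of nontrivial cocycles -/

/-- The recursively defined subspaces `Ĉ^n_x` of nontrivial cocycles. -/
noncomputable def Chat (r : ℕ) {m : ℕ} (a b x : Fin m) : ℕ → Submodule ℂ (Cochain m)
  | 0 => Submodule.span ℂ {Finsupp.single (([] : List (Fin m)), x) 1}
  | 1 => Submodule.span ℂ
      ({Finsupp.single ([a], x) 1} ∪
        ⋃ c ∈ {c : Fin m | c ≠ a ∧ c ≠ b}, lam [c] '' (Chat r a b x 0 : Set (Cochain m)))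
  | n + 2 => Submodule.span ℂ
      ((⋃ c ∈ {c : Fin m | c ≠ a ∧ c ≠ b},
          lam [c] '' (Chat r a b x (n + 1) : Set (Cochain m))) ∪
        (theta a b '' (Chat r a b x n : Set (Cochain m))) ∪
        ⋃ c ∈ {c : Fin m | c ≠ a ∧ c ≠ b},
          (lam [a] + rho r [a]) '' (lam [c] '' (Chat r a b x n : Set (Cochain m))))

/-!
On `C^n_x` the differential `D_x` is `φ ↦ -(-1)^{|φ|} φ ∘ d`, whatever `x` is. It commutes with
`λ^c` for `c ≠ b`, whereas `D λ^b = λ^b D - λ^a λ^a ε` with `ε` the parity sign. Write a cocycle of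
degree at least two as `z = ∑ λ^c z_c` according to its first letter, and likewise
`z_c = ∑ λ^d z_{cd}`. Adding the coboundary `D (λ^b ε z_{aa})` makes `z_{aa}` vanish, and then
the cocycle condition forces `z_b = -λ^a z_{ab}`, so that
`z = ∑ λ^c u_c + θ w + ∑ (λ^a + ρ^a) λ^c v_c` with `c` running over the indices outside `{a, b}`.
The cocycles `v_c = z_{ac}`, `w = z_{ab}` and `u_c = z_c - ρ^a v_c` are read off from `z` by
contractions that preserve cocycles and coboundaries, so the decomposition passes to cohomology.
-/

section Letters

variable {r m : ℕ} {a b : Fin m}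

lemma ne_of_par (ha : par r a = 0) (hb : par r b = 1) : a ≠ b := by
  rintro rfl
  omega

lemma single_cons (c : Fin m) (I : List (Fin m)) (x : Fin m) (t : ℂ) :
    (Finsupp.single (c :: I, x) t : Cochain m) = lam [c] (Finsupp.single (I, x) t) := by
  simp [lam]

lemma linearMap_ext_lam {M : Type*} [AddCommMonoid M] [Module ℂ M] {f g : Cochain m →ₗ[ℂ] M}
    (nil : ∀ x, f (Finsupp.single ([], x) 1) = g (Finsupp.single ([], x) 1))
    (cons : ∀ c u, f u = g u → f (lam [c] u) = g (lam [c] u)) : f = g := by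
  refine Finsupp.lhom_ext' fun ⟨I, x⟩ => LinearMap.ext_ring ?_
  simp only [LinearMap.comp_apply, Finsupp.lsingle_apply]
  induction I with
  | nil => exact nil x
  | cons c I ih => simpa only [single_cons] using cons c _ ih

lemma twist_single (I : List (Fin m)) (x : Fin m) (t : ℂ) :
    twist r (Finsupp.single (I, x) t) = (-1 : ℂ) ^ ppar r (I, x) • Finsupp.single (I, x) t := by
  simp [twist, mul_comm]

lemma ppar_cons (c : Fin m) (I : List (Fin m)) (x : Fin m) :
    ppar r (c :: I, x) = par r c + ppar r (I, x) := by
  simp [ppar, lpar, add_assoc]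

lemma twist_twist (u : Cochain m) : twist r (twist r u) = u := by
  suffices twist r ∘ₗ twist r = (LinearMap.id : Cochain m →ₗ[ℂ] Cochain m) from
    LinearMap.congr_fun this u
  ext ⟨I, x⟩ : 2
  simp [twist_single, ← mul_pow]

lemma twist_lam (c : Fin m) (u : Cochain m) :
    twist r (lam [c] u) = (-1 : ℂ) ^ par r c • lam [c] (twist r u) := by
  suffices twist r ∘ₗ lam [c] = (-1 : ℂ) ^ par r c • (lam [c] ∘ₗ twist r) from
    LinearMap.congr_fun this u
  ext ⟨I, x⟩ : 2
  simp only [LinearMap.comp_apply, LinearMap.smul_apply, Finsupp.lsingle_apply, ← single_cons,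
    twist_single, ppar_cons, pow_add, map_smul, smul_smul]

lemma rho_single (ha : par r a = 0) (I : List (Fin m)) (x : Fin m) (t : ℂ) :
    rho r [a] (Finsupp.single (I, x) t) = Finsupp.single (I ++ [a], x) t := by
  simp [rho, lpar, ha]

lemma rho_lam (ha : par r a = 0) (c : Fin m) (u : Cochain m) :
    rho r [a] (lam [c] u) = lam [c] (rho r [a] u) := by
  suffices rho r [a] ∘ₗ lam [c] = lam [c] ∘ₗ rho r [a] from LinearMap.congr_fun this u
  ext ⟨I, x⟩ : 2
  simp [← single_cons, rho_single ha]

lemma twist_rho (ha : par r a = 0) (u : Cochain m) :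
    twist r (rho r [a] u) = rho r [a] (twist r u) := by
  suffices twist r ∘ₗ rho r [a] = rho r [a] ∘ₗ twist r from LinearMap.congr_fun this u
  ext ⟨I, x⟩ : 2
  simp [rho_single ha, twist_single, ppar, lpar, ha]

lemma theta_apply (u : Cochain m) :
    theta a b u = lam [a] (lam [b] u) - lam [b] (lam [a] u) := by
  suffices theta a b = lam [a] ∘ₗ lam [b] - lam [b] ∘ₗ lam [a] from LinearMap.congr_fun this u
  ext ⟨I, x⟩ : 2
  simp [theta, lam]

/-- The contraction `φ^{dI}_x ↦ δ^c_d φ^I_x` (zero on `φ_x`), which reads off the component of a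
cochain along the first letter `c`; it is a left inverse of `λ^c`. -/
noncomputable def strip (c : Fin m) : Cochain m →ₗ[ℂ] Cochain m :=
  Finsupp.lsum ℂ fun p => LinearMap.toSpanSingleton ℂ (Cochain m)
    (if p.1.head? = some c then Finsupp.single (p.1.tail, p.2) (1 : ℂ) else 0)

lemma strip_single_nil (c x : Fin m) (t : ℂ) : strip c (Finsupp.single ([], x) t) = 0 := by
  simp [strip]

lemma strip_lam (c d : Fin m) (u : Cochain m) :
    strip c (lam [d] u) = if d = c then u else 0 := by
  suffices strip c ∘ₗ lam [d] = if d = c then LinearMap.id else 0 by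
    have h := LinearMap.congr_fun this u
    split_ifs at h ⊢ <;> exact h
  ext ⟨I, x⟩ : 2
  by_cases h : d = c <;> simp [← single_cons, strip, h]

lemma strip_lam_self (c : Fin m) (u : Cochain m) : strip c (lam [c] u) = u := by
  rw [strip_lam, if_pos rfl]

lemma strip_lam_of_ne {c d : Fin m} (h : d ≠ c) (u : Cochain m) : strip c (lam [d] u) = 0 := by
  rw [strip_lam, if_neg h]

end Letters

section InnerDifferential

variable {r m : ℕ} {a b : Fin m}

/-- The operator `φ ↦ -(-1)^{|φ|} φ ∘ d` for `d = φ^{(a,a)}_b`. It preserves the output index, and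
it is the common expression of all the restricted differentials `D_x`. -/
noncomputable def innerD (r : ℕ) {m : ℕ} (a b : Fin m) : Cochain m →ₗ[ℂ] Cochain m :=
  -((comp r).flip (dd a b) ∘ₗ twist r)

lemma comp_single_single (p q : List (Fin m) × Fin m) :
    comp r (Finsupp.single p 1) (Finsupp.single q 1) = basisComp r p q := by
  simp [comp]

lemma innerD_single (I : List (Fin m)) (x : Fin m) :
    innerD r a b (Finsupp.single (I, x) 1) =
      -(-1 : ℂ) ^ ppar r (I, x) • basisComp r (I, x) ([a, a], b) := by
  simp only [innerD, LinearMap.neg_apply, LinearMap.comp_apply, twist_single, map_smul,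
    LinearMap.flip_apply, dd, comp_single_single, neg_smul]

lemma innerD_single_nil (x : Fin m) : innerD r a b (Finsupp.single ([], x) 1) = 0 := by
  simp [innerD_single, basisComp]

lemma basisComp_cons (c : Fin m) (I : List (Fin m)) (x : Fin m) (q : List (Fin m) × Fin m) :
    basisComp r (c :: I, x) q = (-1 : ℂ) ^ (par r c * ppar r q) •
      ((if c = q.2 then Finsupp.single (q.1 ++ I, x) 1 else 0) +
        lam [c] (basisComp r (I, x) q)) := by
  unfold basisComp
  rw [smul_add, map_sum, Finset.smul_sum]
  refine (Fin.sum_univ_succ _).trans (congrArg₂ _ ?_ (Finset.sum_congr rfl fun k _ => ?_))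
  · simp [insertAt, lpar]
  · simp only [apply_ite (lam [c]), map_smul, map_zero, smul_ite, smul_zero,
      smul_smul, ← pow_add, ← single_cons]
    simp [insertAt, lpar, add_mul]

lemma neg_one_pow_mul_ppar (hb : par r b = 1) (k : ℕ) :
    (-1 : ℂ) ^ (k * ppar r ([a, a], b)) = (-1) ^ k := by
  have hd : ppar r ([a, a], b) = 2 * par r a + 1 := by simp [ppar, lpar, hb, two_mul]
  rw [hd, mul_comm, pow_mul, pow_succ, (even_two_mul _).neg_one_pow, one_mul]

lemma innerD_lam (hb : par r b = 1) (c : Fin m) (u : Cochain m) :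
    innerD r a b (lam [c] u) =
      lam [c] (innerD r a b u) -
        (if c = b then (1 : ℂ) else 0) • lam [a] (lam [a] (twist r u)) := by
  suffices innerD r a b ∘ₗ lam [c] = lam [c] ∘ₗ innerD r a b -
      (if c = b then (1 : ℂ) else 0) • (lam [a] ∘ₗ lam [a] ∘ₗ twist r) from
    LinearMap.congr_fun this u
  ext ⟨I, x⟩ : 2
  simp only [LinearMap.comp_apply, LinearMap.sub_apply, LinearMap.smul_apply,
    Finsupp.lsingle_apply, ← single_cons, innerD_single, twist_single, basisComp_cons,
    ppar_cons c I x, neg_one_pow_mul_ppar hb, map_smul, pow_add, List.cons_append, List.nil_append]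
  have hc : (-1 : ℂ) ^ par r c * (-1) ^ par r c = 1 := by simp [← mul_pow]
  rw [smul_smul, neg_mul, mul_right_comm, hc]
  split_ifs <;> module

lemma innerD_lam_of_ne (hb : par r b = 1) {c : Fin m} (hc : c ≠ b) (u : Cochain m) :
    innerD r a b (lam [c] u) = lam [c] (innerD r a b u) := by
  simp [innerD_lam hb, hc]

lemma innerD_lam_right (hb : par r b = 1) (u : Cochain m) :
    innerD r a b (lam [b] u) = lam [b] (innerD r a b u) - lam [a] (lam [a] (twist r u)) := by
  simp [innerD_lam hb]

lemma innerD_twist (hb : par r b = 1) (u : Cochain m) :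
    innerD r a b (twist r u) = -twist r (innerD r a b u) := by
  suffices innerD r a b ∘ₗ twist r = -(twist r ∘ₗ innerD r a b) from LinearMap.congr_fun this u
  refine linearMap_ext_lam (fun x => ?_) fun c u ih => ?_
  · simp [twist_single, innerD_single_nil, -Finsupp.smul_single]
  · simp only [LinearMap.comp_apply, LinearMap.neg_apply] at ih ⊢
    have ha : (-1 : ℂ) ^ par r a * (-1) ^ par r a = 1 := by simp [← mul_pow]
    by_cases hc : c = b
    · subst hc
      simp only [twist_lam, map_smul, innerD_lam_right hb, ih, twist_twist, map_sub, map_neg, hb,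
        smul_smul, ha]
      module
    · simp only [twist_lam, map_smul, innerD_lam_of_ne hb hc, ih, map_neg, smul_neg]

lemma innerD_innerD (hb : par r b = 1) (hab : a ≠ b) (u : Cochain m) :
    innerD r a b (innerD r a b u) = 0 := by
  suffices innerD r a b ∘ₗ innerD r a b = 0 from LinearMap.congr_fun this u
  refine linearMap_ext_lam (fun x => by simp [innerD_single_nil]) fun c u ih => ?_
  simp only [LinearMap.comp_apply, LinearMap.zero_apply] at ih ⊢
  by_cases hc : c = b
  · subst hc
    simp [innerD_lam_right hb, innerD_lam_of_ne hb hab, innerD_twist hb, ih]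
  · simp [innerD_lam_of_ne hb hc, ih]

lemma innerD_theta (ha : par r a = 0) (hb : par r b = 1) (u : Cochain m) :
    innerD r a b (theta a b u) = theta a b (innerD r a b u) := by
  have hab := ne_of_par ha hb
  simp only [theta_apply, map_sub, innerD_lam_of_ne hb hab, innerD_lam_right hb, twist_lam, ha,
    pow_zero, one_smul]
  abel

lemma innerD_rho (ha : par r a = 0) (hb : par r b = 1) (u : Cochain m) :
    innerD r a b (rho r [a] u) = rho r [a] (innerD r a b u) := by
  have hab := ne_of_par ha hb
  suffices innerD r a b ∘ₗ rho r [a] = rho r [a] ∘ₗ innerD r a b from LinearMap.congr_fun this u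
  refine linearMap_ext_lam (fun x => ?_) fun c u ih => ?_
  · simp [rho_single ha, single_cons, innerD_lam_of_ne hb hab, innerD_single_nil]
  · simp only [LinearMap.comp_apply] at ih ⊢
    by_cases hc : c = b
    · subst hc
      simp only [rho_lam ha, innerD_lam_right hb, ih, map_sub, twist_rho ha]
    · simp only [rho_lam ha, innerD_lam_of_ne hb hc, ih]

lemma strip_innerD_of_ne (hb : par r b = 1) {c : Fin m} (hc : c ≠ a) (u : Cochain m) :
    strip c (innerD r a b u) = innerD r a b (strip c u) := by
  suffices strip c ∘ₗ innerD r a b = innerD r a b ∘ₗ strip c from LinearMap.congr_fun this u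
  refine linearMap_ext_lam (fun x => ?_) fun d u _ => ?_
  · simp [innerD_single_nil, strip_single_nil]
  · simp only [LinearMap.comp_apply, innerD_lam hb, map_sub, map_smul, strip_lam_of_ne hc.symm,
      smul_zero, sub_zero]
    by_cases hd : d = c <;> simp [strip_lam, hd]

lemma strip_left_innerD (hb : par r b = 1) (hab : a ≠ b) (u : Cochain m) :
    strip a (innerD r a b u) = innerD r a b (strip a u) - lam [a] (twist r (strip b u)) := by
  suffices strip a ∘ₗ innerD r a b = innerD r a b ∘ₗ strip a - lam [a] ∘ₗ twist r ∘ₗ strip b from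
    LinearMap.congr_fun this u
  refine linearMap_ext_lam (fun x => ?_) fun d u _ => ?_
  · simp [innerD_single_nil, strip_single_nil]
  · simp only [LinearMap.comp_apply, LinearMap.sub_apply, innerD_lam hb, map_sub, map_smul,
      strip_lam_self]
    by_cases hd : d = b
    · simp [strip_lam, hd, hab.symm]
    · by_cases hda : d = a <;> simp [strip_lam, hd, hda, hab]

lemma innerD_strip_left_of_innerD_eq_zero (hb : par r b = 1) (hab : a ≠ b) {z : Cochain m}
    (hD : innerD r a b z = 0) : innerD r a b (strip a z) = lam [a] (twist r (strip b z)) :=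
  sub_eq_zero.1 (by rw [← strip_left_innerD hb hab, hD, map_zero])

lemma strip_right_eq_of_innerD_eq_zero (ha : par r a = 0) (hb : par r b = 1)
    {z : Cochain m} (hD : innerD r a b z = 0) (hz : strip a (strip a z) = 0) :
    strip b z = -lam [a] (strip b (strip a z)) := by
  have hab := ne_of_par ha hb
  have hDaa : twist r (strip b z) = -lam [a] (twist r (strip b (strip a z))) := by
    simpa [innerD_strip_left_of_innerD_eq_zero hb hab hD, hz, strip_lam_self] using
      strip_left_innerD hb hab (strip a z)
  simpa [twist_twist, twist_lam, ha] using congrArg (twist r) hDaa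

end InnerDifferential

section Grading

variable {r m n : ℕ} {a b x : Fin m}

lemma single_mem_Cnx (I : List (Fin m)) (x : Fin m) :
    (Finsupp.single (I, x) 1 : Cochain m) ∈ Cnx m I.length x :=
  subset_span ⟨I, rfl, rfl⟩

lemma Cnx_le_iff {N : Submodule ℂ (Cochain m)} :
    Cnx m n x ≤ N ↔ ∀ I : List (Fin m), I.length = n → Finsupp.single (I, x) 1 ∈ N := by
  refine span_le.trans ⟨fun h I hI => h ⟨I, hI, rfl⟩, ?_⟩
  rintro h _ ⟨I, hI, rfl⟩
  exact h I hI

lemma Cnx_zero (x : Fin m) : Cnx m 0 x = ℂ ∙ (Finsupp.single ([], x) 1 : Cochain m) := by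
  simp [Cnx]

lemma lam_mem_Cnx (c : Fin m) {u : Cochain m} (hu : u ∈ Cnx m n x) :
    lam [c] u ∈ Cnx m (n + 1) x := by
  suffices Cnx m n x ≤ (Cnx m (n + 1) x).comap (lam [c]) from this hu
  refine Cnx_le_iff.2 fun I hI => ?_
  rw [mem_comap, ← single_cons]
  exact hI ▸ single_mem_Cnx (c :: I) x

lemma Cnx_succ (n : ℕ) (x : Fin m) : Cnx m (n + 1) x = ⨆ c, (Cnx m n x).map (lam [c]) := by
  refine le_antisymm (Cnx_le_iff.2 fun I hI => ?_)
    (iSup_le fun c => map_le_iff_le_comap.2 fun u hu => lam_mem_Cnx c hu)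
  obtain ⟨c, I, rfl⟩ := List.exists_cons_of_length_eq_add_one hI
  obtain rfl : I.length = n := by simpa using hI
  rw [single_cons]
  exact mem_iSup_of_mem c (mem_map_of_mem (single_mem_Cnx I x))

lemma twist_mem_Cnx {u : Cochain m} (hu : u ∈ Cnx m n x) : twist r u ∈ Cnx m n x := by
  suffices Cnx m n x ≤ (Cnx m n x).comap (twist r) from this hu
  refine Cnx_le_iff.2 fun I hI => ?_
  rw [mem_comap, twist_single]
  exact smul_mem _ _ (hI ▸ single_mem_Cnx I x)

lemma rho_mem_Cnx (c : Fin m) {u : Cochain m} (hu : u ∈ Cnx m n x) :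
    rho r [c] u ∈ Cnx m (n + 1) x := by
  suffices Cnx m n x ≤ (Cnx m (n + 1) x).comap (rho r [c]) from this hu
  refine Cnx_le_iff.2 fun I hI => ?_
  have hsingle : rho r [c] (Finsupp.single (I, x) 1) =
      (-1 : ℂ) ^ (lpar r I * lpar r [c]) • Finsupp.single (I ++ [c], x) 1 := by
    simp [rho]
  rw [mem_comap, hsingle]
  exact smul_mem _ _ (by simpa [hI] using single_mem_Cnx (I ++ [c]) x)

lemma strip_eq_zero_of_mem_Cnx_zero (c : Fin m) {u : Cochain m} (hu : u ∈ Cnx m 0 x) :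
    strip c u = 0 := by
  rw [Cnx_zero] at hu
  obtain ⟨t, rfl⟩ := mem_span_singleton.1 hu
  rw [map_smul, strip_single_nil, smul_zero]

lemma strip_mem_Cnx (c : Fin m) {u : Cochain m} (hu : u ∈ Cnx m (n + 1) x) :
    strip c u ∈ Cnx m n x := by
  suffices Cnx m (n + 1) x ≤ (Cnx m n x).comap (strip c) from this hu
  rw [Cnx_succ]
  refine iSup_le fun d => map_le_iff_le_comap.2 fun v hv => ?_
  rw [mem_comap, mem_comap, strip_lam]
  split_ifs
  exacts [hv, zero_mem _]

lemma eq_sum_lam_strip {u : Cochain m} (hu : u ∈ Cnx m (n + 1) x) :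
    u = ∑ c, lam [c] (strip c u) := by
  suffices Cnx m (n + 1) x ≤ LinearMap.eqLocus LinearMap.id (∑ c, lam [c] ∘ₗ strip c) by
    simpa using this hu
  rw [Cnx_succ]
  refine iSup_le fun d => map_le_iff_le_comap.2 fun v _ => ?_
  simp [strip_lam, apply_ite (lam _)]

lemma innerD_eq_zero_of_mem_Cnx_zero {u : Cochain m} (hu : u ∈ Cnx m 0 x) :
    innerD r a b u = 0 := by
  rw [Cnx_zero] at hu
  obtain ⟨t, rfl⟩ := mem_span_singleton.1 hu
  rw [map_smul, innerD_single_nil, smul_zero]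

lemma innerD_mem_Cnx (hb : par r b = 1) {u : Cochain m} (hu : u ∈ Cnx m n x) :
    innerD r a b u ∈ Cnx m (n + 1) x := by
  induction n generalizing u with
  | zero => rw [innerD_eq_zero_of_mem_Cnx_zero hu]; exact zero_mem _
  | succ n ih =>
    suffices Cnx m (n + 1) x ≤ (Cnx m (n + 1 + 1) x).comap (innerD r a b) from this hu
    rw [Cnx_succ]
    refine iSup_le fun c => map_le_iff_le_comap.2 fun v hv => ?_
    rw [mem_comap, mem_comap, innerD_lam hb]
    exact sub_mem (lam_mem_Cnx c (ih hv))
      (smul_mem _ _ (lam_mem_Cnx a (lam_mem_Cnx a (twist_mem_Cnx hv))))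

lemma projOut_single (x : Fin m) (I : List (Fin m)) (y : Fin m) :
    projOut x (Finsupp.single (I, y) 1) = if y = x then Finsupp.single (I, y) 1 else 0 := by
  simp [projOut]

lemma projOut_of_mem_Cnx {u : Cochain m} (hu : u ∈ Cnx m n x) : projOut x u = u := by
  suffices Cnx m n x ≤ LinearMap.eqLocus (projOut x) LinearMap.id from this hu
  exact Cnx_le_iff.2 fun I _ => by simp [projOut_single]

lemma comp_dd_of_mem_Cnx (hx : x ≠ a) {u : Cochain m} (hu : u ∈ Cnx m n x) :
    comp r (dd a b) u = 0 := by
  suffices Cnx m n x ≤ LinearMap.ker (comp r (dd a b)) from this hu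
  refine Cnx_le_iff.2 fun I _ => ?_
  rw [LinearMap.mem_ker, dd, comp_single_single, basisComp_cons, basisComp_cons]
  simp [basisComp, hx.symm]

lemma projOut_comp_dd (hab : a ≠ b) (u : Cochain m) : projOut a (comp r (dd a b) u) = 0 := by
  suffices projOut a ∘ₗ comp r (dd a b) = 0 from LinearMap.congr_fun this u
  ext ⟨I, x⟩ : 2
  simp only [LinearMap.comp_apply, Finsupp.lsingle_apply, dd, comp_single_single, basisComp,
    map_sum, apply_ite (projOut a), map_smul, projOut_single, hab.symm, map_zero]
  simp

lemma Dx_eq_innerD (hb : par r b = 1) (hab : a ≠ b) {u : Cochain m} (hu : u ∈ Cnx m n x) :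
    Dx r a b x u = innerD r a b u := by
  have hD : Dop r a b u = comp r (dd a b) u + innerD r a b u := by
    simp [Dop, innerD, sub_eq_add_neg]
  unfold Dx
  split_ifs with hx
  · subst hx
    rw [LinearMap.comp_apply, hD, map_add, projOut_comp_dd hab, zero_add,
      projOut_of_mem_Cnx (innerD_mem_Cnx hb hu)]
  · rw [hD, comp_dd_of_mem_Cnx hx hu, zero_add]

lemma mem_Zx (hb : par r b = 1) (hab : a ≠ b) {z : Cochain m} :
    z ∈ Zx r a b x n ↔ z ∈ Cnx m n x ∧ innerD r a b z = 0 :=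
  and_congr_right fun hz => by rw [SetLike.mem_coe, LinearMap.mem_ker, Dx_eq_innerD hb hab hz]

lemma mem_Bx_succ (hb : par r b = 1) (hab : a ≠ b) {z : Cochain m} :
    z ∈ Bx r a b x (n + 1) ↔ ∃ y ∈ Cnx m n x, innerD r a b y = z :=
  exists_congr fun y => and_congr_right fun hy => by rw [Dx_eq_innerD hb hab hy]

lemma Bx_one (hb : par r b = 1) (hab : a ≠ b) : Bx r a b x 1 = ⊥ := by
  refine eq_bot_iff.2 fun z hz => ?_
  obtain ⟨y, hy, rfl⟩ := (mem_Bx_succ hb hab).1 hz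
  exact innerD_eq_zero_of_mem_Cnx_zero hy

lemma Bx_le_Zx (hb : par r b = 1) (hab : a ≠ b) : Bx r a b x n ≤ Zx r a b x n := by
  cases n with
  | zero => exact bot_le
  | succ n =>
    intro z hz
    obtain ⟨y, hy, rfl⟩ := (mem_Bx_succ hb hab).1 hz
    exact (mem_Zx hb hab).2 ⟨innerD_mem_Cnx hb hy, innerD_innerD hb hab y⟩

end Grading

section CochainMap

variable {r m n k l : ℕ} {a b x : Fin m} {f g : Cochain m →ₗ[ℂ] Cochain m}

/-- `f` is a degree-`k` endomorphism of the complex `(C^•_x, D_x)`, with `D_x` given by `innerD`;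
only such `f` that commute with the differential without a sign are needed. -/
structure IsCochainMap (r : ℕ) {m : ℕ} (a b x : Fin m) (k : ℕ) (f : Cochain m →ₗ[ℂ] Cochain m) :
    Prop where
  map_mem : ∀ {n u}, u ∈ Cnx m n x → f u ∈ Cnx m (n + k) x
  comm : ∀ u, innerD r a b (f u) = f (innerD r a b u)

namespace IsCochainMap

lemma add (hf : IsCochainMap r a b x k f) (hg : IsCochainMap r a b x k g) :
    IsCochainMap r a b x k (f + g) where
  map_mem hu := add_mem (hf.map_mem hu) (hg.map_mem hu)
  comm u := by simp only [LinearMap.add_apply, map_add, hf.comm, hg.comm]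

lemma comp (hf : IsCochainMap r a b x k f) (hg : IsCochainMap r a b x l g) :
    IsCochainMap r a b x (l + k) (f ∘ₗ g) where
  map_mem hu := add_assoc _ l k ▸ hf.map_mem (hg.map_mem hu)
  comm u := by simp only [LinearMap.comp_apply, hf.comm, hg.comm]

lemma map_mem_Zx (hf : IsCochainMap r a b x k f) (hb : par r b = 1) (hab : a ≠ b) {u : Cochain m}
    (hu : u ∈ Zx r a b x n) : f u ∈ Zx r a b x (n + k) := by
  rw [mem_Zx hb hab] at hu ⊢
  exact ⟨hf.map_mem hu.1, by rw [hf.comm, hu.2, map_zero]⟩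

lemma map_mem_Bx (hf : IsCochainMap r a b x k f) (hb : par r b = 1) (hab : a ≠ b) {u : Cochain m}
    (hu : u ∈ Bx r a b x n) : f u ∈ Bx r a b x (n + k) := by
  cases n with
  | zero => rw [(Submodule.mem_bot ℂ).1 hu, map_zero]; exact zero_mem _
  | succ n =>
    obtain ⟨y, hy, rfl⟩ := (mem_Bx_succ hb hab).1 hu
    rw [Nat.add_right_comm, mem_Bx_succ hb hab]
    exact ⟨f y, hf.map_mem hy, hf.comm y⟩

end IsCochainMap

lemma isCochainMap_lam (hb : par r b = 1) {c : Fin m} (hc : c ≠ b) :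
    IsCochainMap r a b x 1 (lam [c]) :=
  ⟨lam_mem_Cnx c, innerD_lam_of_ne hb hc⟩

lemma isCochainMap_rho (ha : par r a = 0) (hb : par r b = 1) :
    IsCochainMap r a b x 1 (rho r [a]) :=
  ⟨rho_mem_Cnx a, innerD_rho ha hb⟩

lemma isCochainMap_theta (ha : par r a = 0) (hb : par r b = 1) :
    IsCochainMap r a b x 2 (theta a b) where
  map_mem hu := by
    rw [theta_apply]
    exact sub_mem (lam_mem_Cnx a (lam_mem_Cnx b hu)) (lam_mem_Cnx b (lam_mem_Cnx a hu))
  comm := innerD_theta ha hb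

lemma strip_mem_Zx (hb : par r b = 1) (hab : a ≠ b) {c : Fin m} (hc : c ≠ a) {z : Cochain m}
    (hz : z ∈ Zx r a b x (n + 1)) : strip c z ∈ Zx r a b x n := by
  rw [mem_Zx hb hab] at hz ⊢
  exact ⟨strip_mem_Cnx c hz.1, by rw [← strip_innerD_of_ne hb hc, hz.2, map_zero]⟩

lemma strip_strip_mem_Zx (hb : par r b = 1) (hab : a ≠ b) {c : Fin m} (hc : c ≠ a) {z : Cochain m}
    (hz : z ∈ Zx r a b x (n + 2)) : strip c (strip a z) ∈ Zx r a b x n := by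
  rw [mem_Zx hb hab] at hz ⊢
  refine ⟨strip_mem_Cnx c (strip_mem_Cnx a hz.1), ?_⟩
  rw [← strip_innerD_of_ne hb hc, innerD_strip_left_of_innerD_eq_zero hb hab hz.2,
    strip_lam_of_ne hc.symm]

lemma strip_mem_Bx (hb : par r b = 1) (hab : a ≠ b) {c : Fin m} (hc : c ≠ a) {z : Cochain m}
    (hz : z ∈ Bx r a b x (n + 1)) : strip c z ∈ Bx r a b x n := by
  obtain ⟨y, hy, rfl⟩ := (mem_Bx_succ hb hab).1 hz
  rw [strip_innerD_of_ne hb hc]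
  cases n with
  | zero => rw [strip_eq_zero_of_mem_Cnx_zero c hy, map_zero]; exact zero_mem _
  | succ n => exact (mem_Bx_succ hb hab).2 ⟨_, strip_mem_Cnx c hy, rfl⟩

lemma strip_strip_mem_Bx (hb : par r b = 1) (hab : a ≠ b) {c : Fin m} (hc : c ≠ a) {z : Cochain m}
    (hz : z ∈ Bx r a b x (n + 2)) : strip c (strip a z) ∈ Bx r a b x n := by
  obtain ⟨y, hy, rfl⟩ := (mem_Bx_succ hb hab).1 hz
  rw [strip_left_innerD hb hab, map_sub, strip_lam_of_ne hc.symm, sub_zero]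
  exact strip_mem_Bx hb hab hc ((mem_Bx_succ hb hab).2 ⟨_, strip_mem_Cnx a hy, rfl⟩)

end CochainMap

section ChatStep

variable {r m n : ℕ} {a b x : Fin m} {P P' Q Q' : Submodule ℂ (Cochain m)}

/-- The indices outside `{a, b}`, over which the recursion for `Ĉ^n_x` runs. -/
abbrev OtherIndex {m : ℕ} (a b : Fin m) : Type := {c : Fin m // c ≠ a ∧ c ≠ b}

lemma sum_eq_add_add_sum_otherIndex {M : Type*} [AddCommMonoid M] (hab : a ≠ b) (f : Fin m → M) :
    ∑ c, f c = f a + f b + ∑ c : OtherIndex a b, f c := by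
  have h : Finset.univ.filter (fun c : Fin m => c ≠ a ∧ c ≠ b) = {a, b}ᶜ := by ext; simp
  rw [← Finset.sum_add_sum_compl {a, b}, Finset.sum_pair hab, ← h,
    Finset.sum_subtype (p := fun c => c ≠ a ∧ c ≠ b) _ (by simp)]

lemma card_otherIndex (hab : a ≠ b) : m = Fintype.card (OtherIndex a b) + 2 := by
  simpa [add_comm] using sum_eq_add_add_sum_otherIndex hab fun _ => (1 : ℕ)

/-- The cochain `∑ λ^c u_c + θ w + ∑ (λ^a + ρ^a) λ^c v_c` built from the data `(u, w, v)`, the sums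
running over the indices `c ∉ {a, b}`. -/
noncomputable def assemble (r : ℕ) {m : ℕ} (a b : Fin m) :
    (OtherIndex a b → Cochain m) × Cochain m × (OtherIndex a b → Cochain m) →ₗ[ℂ] Cochain m :=
  (∑ c : OtherIndex a b, lam [c.1] ∘ₗ LinearMap.proj c).coprod
    ((theta a b).coprod
      (∑ c : OtherIndex a b, ((lam [a] + rho r [a]) ∘ₗ lam [c.1]) ∘ₗ LinearMap.proj c))

lemma assemble_apply (u v : OtherIndex a b → Cochain m) (w : Cochain m) :
    assemble r a b (u, w, v) = ∑ c, lam [c.1] (u c) +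
      (theta a b w + ∑ c, ((lam [a] + rho r [a]) ∘ₗ lam [c.1]) (v c)) := by
  simp [assemble]

/-- The space of all `assemble (u, w, v)` with `u_c ∈ P` and `w, v_c ∈ Q`: the operation that
produces `Ĉ^{n+2}_x` from `P = Ĉ^{n+1}_x` and `Q = Ĉ^n_x`. -/
noncomputable def chatStep (r : ℕ) {m : ℕ} (a b : Fin m) (P Q : Submodule ℂ (Cochain m)) :
    Submodule ℂ (Cochain m) :=
  LinearMap.range (assemble r a b ∘ₗ
    (P.subtype.compLeft (OtherIndex a b)).prodMap
      (Q.subtype.prodMap (Q.subtype.compLeft (OtherIndex a b))))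

lemma mem_chatStep {z : Cochain m} : z ∈ chatStep r a b P Q ↔
    ∃ u w v, (∀ c, u c ∈ P) ∧ w ∈ Q ∧ (∀ c, v c ∈ Q) ∧ assemble r a b (u, w, v) = z := by
  constructor
  · rintro ⟨⟨u, w, v⟩, rfl⟩
    exact ⟨_, _, _, fun c => (u c).2, w.2, fun c => (v c).2, rfl⟩
  · rintro ⟨u, w, v, hu, hw, hv, rfl⟩
    exact ⟨(fun c => ⟨u c, hu c⟩, ⟨w, hw⟩, fun c => ⟨v c, hv c⟩), rfl⟩

lemma chatStep_le_iff {N : Submodule ℂ (Cochain m)} : chatStep r a b P Q ≤ N ↔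
    (∀ c : OtherIndex a b, P ≤ N.comap (lam [c.1])) ∧ Q ≤ N.comap (theta a b) ∧
      ∀ c : OtherIndex a b, Q ≤ N.comap ((lam [a] + rho r [a]) ∘ₗ lam [c.1]) := by
  constructor
  · refine fun h => ⟨fun c u hu => h ?_, fun w hw => h ?_, fun c v hv => h ?_⟩ <;>
      rw [mem_chatStep]
    · refine ⟨Pi.single c u, 0, 0, fun d => ?_, zero_mem _, fun _ => zero_mem _, ?_⟩
      · obtain rfl | hd := eq_or_ne d c <;> simp [*]
      · simp [assemble_apply, Pi.single_apply, apply_ite (lam _)]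
    · exact ⟨0, w, 0, fun _ => zero_mem _, hw, fun _ => zero_mem _, by simp [assemble_apply]⟩
    · refine ⟨0, 0, Pi.single c v, fun _ => zero_mem _, zero_mem _, fun d => ?_, ?_⟩
      · obtain rfl | hd := eq_or_ne d c <;> simp [*]
      · simp [assemble_apply, Pi.single_apply, apply_ite (lam _), apply_ite (rho _ _),
          Finset.sum_add_distrib]
  · rintro ⟨hlam, htheta, hrho⟩ z hz
    obtain ⟨u, w, v, hu, hw, hv, rfl⟩ := mem_chatStep.1 hz
    rw [assemble_apply]
    exact add_mem (sum_mem fun c _ => hlam c (hu c))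
      (add_mem (htheta hw) (sum_mem fun c _ => hrho c (hv c)))

lemma chatStep_mono (hP : P ≤ P') (hQ : Q ≤ Q') : chatStep r a b P Q ≤ chatStep r a b P' Q' := by
  intro z hz
  obtain ⟨u, w, v, hu, hw, hv, h⟩ := mem_chatStep.1 hz
  exact mem_chatStep.2 ⟨u, w, v, fun c => hP (hu c), hQ hw, fun c => hQ (hv c), h⟩

lemma chatStep_sup_le :
    chatStep r a b (P ⊔ P') (Q ⊔ Q') ≤ chatStep r a b P Q ⊔ chatStep r a b P' Q' := by
  obtain ⟨h₁, h₂, h₃⟩ := chatStep_le_iff.1 (le_sup_left :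
    chatStep r a b P Q ≤ chatStep r a b P Q ⊔ chatStep r a b P' Q')
  obtain ⟨h₁', h₂', h₃'⟩ := chatStep_le_iff.1 (le_sup_right :
    chatStep r a b P' Q' ≤ chatStep r a b P Q ⊔ chatStep r a b P' Q')
  exact chatStep_le_iff.2 ⟨fun c => sup_le (h₁ c) (h₁' c), sup_le h₂ h₂',
    fun c => sup_le (h₃ c) (h₃' c)⟩

lemma Chat_add_two (n : ℕ) :
    Chat r a b x (n + 2) = chatStep r a b (Chat r a b x (n + 1)) (Chat r a b x n) := by
  refine eq_of_forall_ge_iff fun N => ?_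
  rw [chatStep_le_iff, Chat, span_le]
  simp only [Set.union_subset_iff, Set.iUnion_subset_iff, Set.image_subset_iff, and_assoc,
    Subtype.forall, Set.mem_ofPred_eq]
  rfl

lemma strip_assemble (ha : par r a = 0) (u v : OtherIndex a b → Cochain m) (w : Cochain m)
    (c : OtherIndex a b) :
    strip c.1 (assemble r a b (u, w, v)) = u c + rho r [a] (v c) := by
  simp only [assemble_apply, map_add, map_sum, LinearMap.comp_apply, LinearMap.add_apply,
    theta_apply, map_sub, rho_lam ha, strip_lam, Subtype.coe_inj, c.2.1.symm, c.2.2.symm]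
  simp

lemma strip_left_assemble (ha : par r a = 0) (hab : a ≠ b) (u v : OtherIndex a b → Cochain m)
    (w : Cochain m) :
    strip a (assemble r a b (u, w, v)) = lam [b] w + ∑ c, lam [c.1] (v c) := by
  have hne : ∀ c : OtherIndex a b, c.1 ≠ a := fun c => c.2.1
  simp only [assemble_apply, map_add, map_sum, LinearMap.comp_apply, LinearMap.add_apply,
    theta_apply, map_sub, rho_lam ha, strip_lam, hne, hab.symm]
  simp

lemma strip_right_strip_assemble (ha : par r a = 0) (hab : a ≠ b)
    (u v : OtherIndex a b → Cochain m) (w : Cochain m) :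
    strip b (strip a (assemble r a b (u, w, v))) = w := by
  have hne : ∀ c : OtherIndex a b, c.1 ≠ b := fun c => c.2.2
  simp [strip_left_assemble ha hab, strip_lam, hne]

lemma strip_strip_assemble (ha : par r a = 0) (hab : a ≠ b) (u v : OtherIndex a b → Cochain m)
    (w : Cochain m) (c : OtherIndex a b) :
    strip c.1 (strip a (assemble r a b (u, w, v))) = v c := by
  simp [strip_left_assemble ha hab, strip_lam, Subtype.coe_inj, c.2.2.symm]

lemma assemble_injective (ha : par r a = 0) (hab : a ≠ b) :
    Function.Injective (assemble r a b) := by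
  rw [← LinearMap.ker_eq_bot, LinearMap.ker_eq_bot']
  rintro ⟨u, w, v⟩ h
  obtain rfl : w = 0 := by simpa [h] using (strip_right_strip_assemble ha hab u v w).symm
  obtain rfl : v = 0 := funext fun c => by
    simpa [h] using (strip_strip_assemble ha hab u v 0 c).symm
  obtain rfl : u = 0 := funext fun c => by simpa [h] using (strip_assemble ha u 0 0 c).symm
  rfl

lemma finrank_chatStep (ha : par r a = 0) (hab : a ≠ b) [Module.Finite ℂ P] [Module.Finite ℂ Q] :
    Module.finrank ℂ (chatStep r a b P Q) = Fintype.card (OtherIndex a b) * Module.finrank ℂ P +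
      (Module.finrank ℂ Q + Fintype.card (OtherIndex a b) * Module.finrank ℂ Q) := by
  rw [chatStep, LinearMap.finrank_range_of_inj]
  · simp [Module.finrank_pi_fintype]
  · exact (assemble_injective ha hab).comp <| P.injective_subtype.comp_left.prodMap <|
      Q.injective_subtype.prodMap Q.injective_subtype.comp_left

lemma chatStep_Zx_le (ha : par r a = 0) (hb : par r b = 1) :
    chatStep r a b (Zx r a b x (n + 1)) (Zx r a b x n) ≤ Zx r a b x (n + 2) :=
  have hab := ne_of_par ha hb
  chatStep_le_iff.2 ⟨fun c _ => (isCochainMap_lam hb c.2.2).map_mem_Zx hb hab,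
    fun _ => (isCochainMap_theta ha hb).map_mem_Zx hb hab,
    fun c _ => (((isCochainMap_lam hb hab).add (isCochainMap_rho ha hb)).comp
      (isCochainMap_lam hb c.2.2)).map_mem_Zx hb hab⟩

lemma chatStep_Bx_le (ha : par r a = 0) (hb : par r b = 1) :
    chatStep r a b (Bx r a b x (n + 1)) (Bx r a b x n) ≤ Bx r a b x (n + 2) :=
  have hab := ne_of_par ha hb
  chatStep_le_iff.2 ⟨fun c _ => (isCochainMap_lam hb c.2.2).map_mem_Bx hb hab,
    fun _ => (isCochainMap_theta ha hb).map_mem_Bx hb hab,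
    fun c _ => (((isCochainMap_lam hb hab).add (isCochainMap_rho ha hb)).comp
      (isCochainMap_lam hb c.2.2)).map_mem_Bx hb hab⟩

lemma disjoint_chatStep_Bx (ha : par r a = 0) (hb : par r b = 1)
    (hP : Disjoint P (Bx r a b x (n + 1))) (hQ : Disjoint Q (Bx r a b x n)) :
    Disjoint (chatStep r a b P Q) (Bx r a b x (n + 2)) := by
  have hab := ne_of_par ha hb
  rw [Submodule.disjoint_def] at *
  intro z hz hB
  obtain ⟨u, w, v, hu, hw, hv, rfl⟩ := mem_chatStep.1 hz
  obtain rfl : w = 0 := hQ w hw <| by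
    simpa only [strip_right_strip_assemble ha hab] using strip_strip_mem_Bx hb hab hab.symm hB
  obtain rfl : v = 0 := funext fun c => hQ _ (hv c) <| by
    simpa only [strip_strip_assemble ha hab] using strip_strip_mem_Bx hb hab c.2.1 hB
  obtain rfl : u = 0 := funext fun c => hP _ (hu c) <| by
    simpa [strip_assemble ha] using strip_mem_Bx hb hab c.2.1 hB
  exact map_zero _

lemma eq_assemble_of_innerD_eq_zero (ha : par r a = 0) (hb : par r b = 1)
    {z : Cochain m} (hz : z ∈ Cnx m (n + 2) x) (hD : innerD r a b z = 0)
    (haa : strip a (strip a z) = 0) :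
    z = assemble r a b (fun c => strip c.1 z - rho r [a] (strip c.1 (strip a z)),
      strip b (strip a z), fun c => strip c.1 (strip a z)) := by
  have hab := ne_of_par ha hb
  have hleft : lam [a] (strip a z) = lam [a] (lam [b] (strip b (strip a z))) +
      ∑ c : OtherIndex a b, lam [a] (lam [c.1] (strip c.1 (strip a z))) := by
    conv_lhs => rw [eq_sum_lam_strip (strip_mem_Cnx a hz), sum_eq_add_add_sum_otherIndex hab, haa]
    simp only [map_zero, zero_add, map_add, map_sum]
  have hright : lam [b] (strip b z) = -lam [b] (lam [a] (strip b (strip a z))) := by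
    rw [strip_right_eq_of_innerD_eq_zero ha hb hD haa, map_neg]
  conv_lhs => rw [eq_sum_lam_strip hz, sum_eq_add_add_sum_otherIndex hab, hleft, hright]
  simp only [assemble_apply, theta_apply, LinearMap.comp_apply, LinearMap.add_apply, map_sub,
    rho_lam ha, Finset.sum_sub_distrib, Finset.sum_add_distrib]
  abel

lemma exists_strip_left_strip_left_add_eq_zero (hb : par r b = 1) (hab : a ≠ b)
    {z : Cochain m} (hz : z ∈ Cnx m (n + 2) x) :
    ∃ y ∈ Bx r a b x (n + 2), strip a (strip a (z + y)) = 0 := by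
  refine ⟨innerD r a b (lam [b] (twist r (strip a (strip a z)))), (mem_Bx_succ hb hab).2 ⟨_,
    lam_mem_Cnx b (twist_mem_Cnx (strip_mem_Cnx a (strip_mem_Cnx a hz))), rfl⟩, ?_⟩
  simp [innerD_lam_right hb, twist_twist, strip_lam, hab.symm]

lemma Zx_le_chatStep_sup_Bx (ha : par r a = 0) (hb : par r b = 1) :
    Zx r a b x (n + 2) ≤
      chatStep r a b (Zx r a b x (n + 1)) (Zx r a b x n) ⊔ Bx r a b x (n + 2) := by
  have hab := ne_of_par ha hb
  intro z hz
  obtain ⟨y, hy, haa⟩ :=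
    exists_strip_left_strip_left_add_eq_zero hb hab ((mem_Zx hb hab).1 hz).1
  have hzy : z + y ∈ Zx r a b x (n + 2) := add_mem hz (Bx_le_Zx hb hab hy)
  suffices z + y ∈ chatStep r a b (Zx r a b x (n + 1)) (Zx r a b x n) by
    simpa using sub_mem (mem_sup_left this) (mem_sup_right hy)
  obtain ⟨hC, hD⟩ := (mem_Zx hb hab).1 hzy
  have hv : ∀ c : OtherIndex a b, strip c.1 (strip a (z + y)) ∈ Zx r a b x n :=
    fun c => strip_strip_mem_Zx hb hab c.2.1 hzy
  exact mem_chatStep.2 ⟨_, _, _,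
    fun c => sub_mem (strip_mem_Zx hb hab c.2.1 hzy)
      ((isCochainMap_rho ha hb).map_mem_Zx hb hab (hv c)),
    strip_strip_mem_Zx hb hab hab.symm hzy, hv,
    (eq_assemble_of_innerD_eq_zero ha hb hC hD haa).symm⟩

end ChatStep

section Cohomology

variable {r m : ℕ} {a b : Fin m}

lemma finrank_quotient_of_disjoint {K V : Type*} [Ring K] [AddCommGroup V] [Module K V]
    {A B Z : Submodule K V} (hdisj : Disjoint A B) (hsup : A ⊔ B = Z) :
    Module.finrank K (Z ⧸ B.comap Z.subtype) = Module.finrank K A := by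
  subst hsup
  rw [← (LinearMap.quotientInfEquivSupQuotient A B).finrank_eq]
  refine (Submodule.quotEquivOfEqBot _ ?_).finrank_eq
  rw [← Submodule.comap_inf, hdisj.eq_bot]
  simp

lemma Chat_one (hab : a ≠ b) (x : Fin m) : Chat r a b x 1 =
    span ℂ (Set.range fun c : {c // c ≠ b} => (Finsupp.single ([c.1], x) 1 : Cochain m)) := by
  refine eq_of_forall_ge_iff fun N => ?_
  have hlam : ∀ c, ((ℂ ∙ (Finsupp.single ([], x) 1 : Cochain m) : Submodule ℂ _) : Set _) ⊆
      lam [c] ⁻¹' N ↔ Finsupp.single ([c], x) 1 ∈ N := fun c =>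
    (span_singleton_le_iff_mem _ (N.comap (lam [c]))).trans (by rw [mem_comap, ← single_cons])
  simp only [Chat, span_le, Set.union_subset_iff, Set.singleton_subset_iff,
    Set.iUnion_subset_iff, Set.image_subset_iff, hlam, Set.mem_ofPred_eq, Set.range_subset_iff,
    Subtype.forall, SetLike.mem_coe]
  refine ⟨fun h c hc => ?_, fun h => ⟨h a hab, fun c hc => h c hc.2⟩⟩
  obtain rfl | hca := eq_or_ne c a
  exacts [h.1, h.2 c ⟨hca, hc⟩]

lemma finrank_Chat_one (hab : a ≠ b) (x : Fin m) :
    Module.finrank ℂ (Chat r a b x 1) = m - 1 := by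
  have hinj : Function.Injective fun c : {c // c ≠ b} => ([c.1], x) := fun c d h =>
    Subtype.ext (by simpa using h)
  have hindep : LinearIndependent ℂ fun c : {c // c ≠ b} =>
      (Finsupp.single ([c.1], x) 1 : Cochain m) :=
    (Finsupp.linearIndependent_single_one ℂ (List (Fin m) × Fin m)).comp _ hinj
  rw [Chat_one hab, finrank_span_eq_card hindep]
  simp [Fintype.card_subtype_compl]

lemma Chat_zero (x : Fin m) : Chat r a b x 0 = Cnx m 0 x := by
  rw [Cnx_zero, Chat]

lemma Chat_one_le_Zx (hb : par r b = 1) (hab : a ≠ b) (x : Fin m) :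
    Chat r a b x 1 ≤ Zx r a b x 1 := by
  rw [Chat_one hab, span_le]
  rintro _ ⟨c, rfl⟩
  refine (mem_Zx hb hab).2 ⟨single_mem_Cnx [c.1] x, ?_⟩
  simp [single_cons, innerD_lam_of_ne hb c.2, innerD_single_nil]

lemma Zx_one_le_Chat (ha : par r a = 0) (hb : par r b = 1) (x : Fin m) :
    Zx r a b x 1 ≤ Chat r a b x 1 := by
  have hab := ne_of_par ha hb
  intro z hz
  obtain ⟨hC, hD⟩ := (mem_Zx hb hab).1 hz
  have hstrip : ∀ c d, strip d (strip c z) = 0 := fun c d =>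
    strip_eq_zero_of_mem_Cnx_zero d (strip_mem_Cnx c hC)
  have hright : strip b z = 0 := by
    rw [strip_right_eq_of_innerD_eq_zero ha hb hD (hstrip a a), hstrip, map_zero, neg_zero]
  rw [eq_sum_lam_strip hC, Chat_one hab]
  refine sum_mem fun c _ => ?_
  by_cases hc : c = b
  · rw [hc, hright, map_zero]
    exact zero_mem _
  · obtain ⟨t, ht⟩ := mem_span_singleton.1 (Cnx_zero x ▸ strip_mem_Cnx c hC)
    rw [← ht, map_smul, ← single_cons]
    exact smul_mem _ t (subset_span ⟨⟨c, hc⟩, rfl⟩)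

lemma Chat_le_Zx (ha : par r a = 0) (hb : par r b = 1) (x : Fin m) (n : ℕ) :
    Chat r a b x n ≤ Zx r a b x n := by
  have hab := ne_of_par ha hb
  induction n using Nat.twoStepInduction with
  | zero =>
    rw [Chat_zero]
    exact fun z hz => (mem_Zx hb hab).2 ⟨hz, innerD_eq_zero_of_mem_Cnx_zero hz⟩
  | one => exact Chat_one_le_Zx hb hab x
  | more n ih ih' =>
    exact Chat_add_two n ▸ (chatStep_mono ih' ih).trans (chatStep_Zx_le ha hb)

lemma disjoint_Chat_Bx (ha : par r a = 0) (hb : par r b = 1) (x : Fin m) (n : ℕ) :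
    Disjoint (Chat r a b x n) (Bx r a b x n) := by
  have hab := ne_of_par ha hb
  induction n using Nat.twoStepInduction with
  | zero => exact disjoint_bot_right
  | one => exact Bx_one (x := x) hb hab ▸ disjoint_bot_right
  | more n ih ih' => exact Chat_add_two n ▸ disjoint_chatStep_Bx ha hb ih' ih

lemma Zx_le_Chat_sup_Bx (ha : par r a = 0) (hb : par r b = 1) (x : Fin m) (n : ℕ) :
    Zx r a b x n ≤ Chat r a b x n ⊔ Bx r a b x n := by
  induction n using Nat.twoStepInduction with
  | zero => exact Chat_zero (r := r) (a := a) (b := b) x ▸ inf_le_left.trans le_sup_left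
  | one => exact (Zx_one_le_Chat ha hb x).trans le_sup_left
  | more n ih ih' =>
    calc Zx r a b x (n + 2)
        ≤ chatStep r a b (Zx r a b x (n + 1)) (Zx r a b x n) ⊔ Bx r a b x (n + 2) :=
          Zx_le_chatStep_sup_Bx ha hb
      _ ≤ chatStep r a b (Chat r a b x (n + 1)) (Chat r a b x n) ⊔
            chatStep r a b (Bx r a b x (n + 1)) (Bx r a b x n) ⊔ Bx r a b x (n + 2) :=
          sup_le_sup_right ((chatStep_mono ih' ih).trans chatStep_sup_le) _
      _ ≤ Chat r a b x (n + 2) ⊔ Bx r a b x (n + 2) := by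
          rw [sup_assoc, sup_eq_right.2 (chatStep_Bx_le ha hb), Chat_add_two]

lemma finite_Cnx (n : ℕ) (x : Fin m) : Module.Finite ℂ (Cnx m n x) := by
  have h : {f : Cochain m | ∃ I : List (Fin m), I.length = n ∧ f = Finsupp.single (I, x) 1} =
      (fun I => Finsupp.single (I, x) 1) '' {I | I.length = n} := by
    ext f; simp [eq_comm]
  rw [Cnx, h]
  exact Module.Finite.span_of_finite ℂ ((List.finite_length_eq _ _).image _)

lemma finrank_Chat (ha : par r a = 0) (hb : par r b = 1) (x : Fin m) (n : ℕ) :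
    Module.finrank ℂ (Chat r a b x n) = (m - 1) ^ n := by
  have hab := ne_of_par ha hb
  induction n using Nat.twoStepInduction with
  | zero => rw [Chat, finrank_span_singleton (by simp), pow_zero]
  | one => rw [finrank_Chat_one hab, pow_one]
  | more n ih ih' =>
    have hfin : ∀ k, Module.Finite ℂ (Chat r a b x k) := fun k =>
      have := finite_Cnx k x
      Submodule.finiteDimensional_of_le ((Chat_le_Zx ha hb x k).trans inf_le_left)
    have hm : m - 1 = Fintype.card (OtherIndex a b) + 1 := by
      have := card_otherIndex hab
      omega
    rw [Chat_add_two, finrank_chatStep ha hab, ih, ih', hm]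
    ring

theorem restricted_cohomology_dim_general (ha : par r a = 0) (hb : par r b = 1) (x : Fin m)
    (n : ℕ) :
    Module.finrank ℂ (Hx r a b x n) = (m - 1) ^ n ∧
      Chat r a b x n ≤ Zx r a b x n ∧
      Chat r a b x n ⊓ Bx r a b x n = ⊥ ∧
      Zx r a b x n ≤ Chat r a b x n ⊔ Bx r a b x n := by
  have hab := ne_of_par ha hb
  have hle := Chat_le_Zx ha hb x n
  have hdisj := disjoint_Chat_Bx ha hb x n
  have hspan := Zx_le_Chat_sup_Bx ha hb x n
  refine ⟨?_, hle, hdisj.eq_bot, hspan⟩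
  rw [finrank_quotient_of_disjoint hdisj (le_antisymm (sup_le hle (Bx_le_Zx hb hab)) hspan),
    finrank_Chat ha hb]

end Cohomology

/-- the cohomology of the restricted complex `(C^•_x, D_x)` has dimension
`(r+s−1)^n`; indeed `Ĉ^n_x` maps isomorphically onto `H^n_x` (it consists of cocycles,
meets the coboundaries trivially, and together with them spans the cocycles). -/
theorem restricted_cohomology_dim (r s : ℕ) (hr : 1 ≤ r) (hs : 1 ≤ s)
    (e1 fs : Fin (r + s)) (he1 : (e1 : ℕ) = 0) (hfs : (fs : ℕ) = r + s - 1) :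
    ∀ x : Fin (r + s), ∀ n : ℕ,
      Module.finrank ℂ (Hx r e1 fs x n) = (r + s - 1) ^ n ∧
      Chat r e1 fs x n ≤ Zx r e1 fs x n ∧
      Chat r e1 fs x n ⊓ Bx r e1 fs x n = ⊥ ∧
      Zx r e1 fs x n ≤ Chat r e1 fs x n ⊔ Bx r e1 fs x n :=
  restricted_cohomology_dim_general (if_pos (by omega)) (if_neg (by omega))

end NilpotentCohomology
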